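/- arXiv:2109.12647 — 2 statements merged into one kernel-verified Lean document; each statement's English description precedes it below -/
import Mathlib

section
/- Let M, S_1,…,S_n, Y_1,…,Y_n be jointly distributed random variables with finite ranges such that for each i ∈ {1,…,n}, S_i is independent of the pair (M, S_{i+1}^n). Define X_i = (M, Y^{i−1}, S_{i+1}^n). Then I(M ; Y^n) ≤ Σ_{i=1}^n [ I(X_i ; Y_i) − I(X_i ; S_i) ], where Y^n = (Y_1,…,Y_n), Y^{i−1} = (Y_1,…,Y_{i−1}), S_{i+1}^n = (S_{i+1},…,S_n), and Y^0 and S_{n+1}^n are interpreted as constants. -/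
open Finset

/-- The Shannon entropy `H(q) = −Σ_{a : q(a)>0} q(a) log₂ q(a)` of a pmf on a finite set. -/
noncomputable def shannonEnt {α : Type} [Fintype α] (q : α → ℝ) : ℝ :=
  -∑ a, if 0 < q a then q a * Real.logb 2 (q a) else 0

/-- The distribution (pushforward pmf) of a random variable `X` on a finite probability
space with pmf `μ`. -/
def rvDist {Ω α : Type} [Fintype Ω] [DecidableEq α] (μ : Ω → ℝ) (X : Ω → α) : α → ℝ :=
  fun a => ∑ ω, if X ω = a then μ ω else 0

/-- The Shannon entropy `H(X)` of a finite-valued random variable `X`. -/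
noncomputable def Hrv {Ω α : Type} [Fintype Ω] [Fintype α] [DecidableEq α]
    (μ : Ω → ℝ) (X : Ω → α) : ℝ :=
  shannonEnt (rvDist μ X)

/-- The mutual information `I(X;Y) = H(X) + H(Y) − H(X,Y)`. -/
noncomputable def MIrv {Ω α β : Type} [Fintype Ω] [Fintype α] [Fintype β]
    [DecidableEq α] [DecidableEq β] (μ : Ω → ℝ) (X : Ω → α) (Y : Ω → β) : ℝ :=
  Hrv μ X + Hrv μ Y - Hrv μ (fun ω => (X ω, Y ω))

/-- `X` and `Y` are independent: their joint distribution factorizes. -/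
def IndepRV {Ω α β : Type} [Fintype Ω] [DecidableEq α] [DecidableEq β]
    (μ : Ω → ℝ) (X : Ω → α) (Y : Ω → β) : Prop :=
  ∀ a b, rvDist μ (fun ω => (X ω, Y ω)) (a, b) = rvDist μ X a * rvDist μ Y b

/-- Probability of the atom of `X` containing `ω`. -/
def atomP {Ω α : Type} [Fintype Ω] [DecidableEq α] (μ : Ω → ℝ) (X : Ω → α) (ω : Ω) : ℝ :=
  rvDist μ X (X ω)

lemma rvDist_nonneg' {Ω α : Type} [Fintype Ω] [DecidableEq α] (μ : Ω → ℝ)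
    (h0 : ∀ ω, 0 ≤ μ ω) (X : Ω → α) (a : α) : 0 ≤ rvDist μ X a := by
  unfold rvDist
  exact Finset.sum_nonneg fun ω _ => by split_ifs <;> simp [h0]

lemma sum_push {Ω α : Type} [Fintype Ω] [Fintype α] [DecidableEq α] (μ : Ω → ℝ)
    (X : Ω → α) (f : α → ℝ) : ∑ a, rvDist μ X a * f a = ∑ ω, μ ω * f (X ω) := by
  unfold rvDist
  simp_rw [Finset.sum_mul]
  rw [Finset.sum_comm]
  refine Finset.sum_congr rfl fun ω _ => ?_
  simp [ite_mul]

lemma Hrv_eq {Ω α : Type} [Fintype Ω] [Fintype α] [DecidableEq α] (μ : Ω → ℝ)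
    (h0 : ∀ ω, 0 ≤ μ ω) (X : Ω → α) :
    Hrv μ X = -∑ ω, μ ω * Real.logb 2 (atomP μ X ω) := by
  unfold Hrv shannonEnt atomP
  rw [← sum_push μ X (fun a => Real.logb 2 (rvDist μ X a))]
  congr 1
  refine Finset.sum_congr rfl fun a _ => ?_
  split_ifs with h
  · rfl
  · have : rvDist μ X a = 0 := le_antisymm (not_lt.mp h) (rvDist_nonneg' μ h0 X a)
    simp [this]

lemma Hrv_congr {Ω α β : Type} [Fintype Ω] [Fintype α] [DecidableEq α] [Fintype β]
    [DecidableEq β] (μ : Ω → ℝ)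
    (h0 : ∀ ω, 0 ≤ μ ω) (X : Ω → α) (Z : Ω → β)
    (h : ∀ ω ω', X ω = X ω' ↔ Z ω = Z ω') : Hrv μ X = Hrv μ Z := by
  rw [Hrv_eq μ h0, Hrv_eq μ h0]
  simp only [atomP, rvDist, h]

lemma MIrv_congr {Ω α β δ : Type} [Fintype Ω] [Fintype α] [DecidableEq α] [Fintype β]
    [DecidableEq β] [Fintype δ] [DecidableEq δ] (μ : Ω → ℝ)
    (h0 : ∀ ω, 0 ≤ μ ω) (X : Ω → α) (V : Ω → β) (Z : Ω → δ)
    (h : ∀ ω ω', (X ω, V ω) = (X ω', V ω') ↔ Z ω = Z ω') :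
    MIrv μ X V = Hrv μ X + Hrv μ V - Hrv μ Z := by
  unfold MIrv
  rw [Hrv_congr μ h0 (fun ω => (X ω, V ω)) Z h]

lemma atomP_pos {Ω α : Type} [Fintype Ω] [DecidableEq α] (μ : Ω → ℝ)
    (h0 : ∀ ω, 0 ≤ μ ω) (X : Ω → α) (ω : Ω) (h : 0 < μ ω) : 0 < atomP μ X ω := by
  unfold atomP rvDist
  refine Finset.sum_pos' (fun ω _ => by split_ifs <;> simp [h0]) ⟨ω, Finset.mem_univ _, by simpa⟩

lemma Hrv_indep {Ω α β : Type} [Fintype Ω] [Fintype α] [DecidableEq α] [Fintype β]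
    [DecidableEq β] (μ : Ω → ℝ)
    (h0 : ∀ ω, 0 ≤ μ ω) (X : Ω → α) (Z : Ω → β) (h : IndepRV μ X Z) :
    Hrv μ (fun ω => (X ω, Z ω)) = Hrv μ X + Hrv μ Z := by
  rw [Hrv_eq μ h0, Hrv_eq μ h0, Hrv_eq μ h0, ← neg_add, ← Finset.sum_add_distrib]
  congr 1
  refine Finset.sum_congr rfl fun ω _ => ?_
  rcases (h0 ω).eq_or_lt with hz | hp
  · simp [← hz]
  · have : atomP μ (fun ω => (X ω, Z ω)) ω = atomP μ X ω * atomP μ Z ω := h _ _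
    rw [this, Real.logb_mul (atomP_pos μ h0 X ω hp).ne' (atomP_pos μ h0 Z ω hp).ne', mul_add]

lemma Hrv_subadd {Ω α β : Type} [Fintype Ω] [Fintype α] [DecidableEq α] [Fintype β]
    [DecidableEq β] (μ : Ω → ℝ)
    (h0 : ∀ ω, 0 ≤ μ ω) (h1 : ∑ ω, μ ω = 1) (X : Ω → α) (Z : Ω → β) :
    Hrv μ (fun ω => (X ω, Z ω)) ≤ Hrv μ X + Hrv μ Z := by
  have tot : ∀ {δ : Type} [Fintype δ] [DecidableEq δ] (W : Ω → δ), ∑ a, rvDist μ W a = 1 := by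
    intro δ _ _ W
    have := sum_push μ W (fun _ => 1)
    simpa [h1] using this
  set W : Ω → α × β := fun ω => (X ω, Z ω) with hW
  have key : ∑ ω, μ ω * (atomP μ X ω * atomP μ Z ω / atomP μ W ω) ≤ 1 := by
    have := sum_push μ W (fun p => rvDist μ X p.1 * rvDist μ Z p.2 / rvDist μ W p)
    unfold atomP
    rw [← this]
    calc _ ≤ ∑ p : α × β, rvDist μ X p.1 * rvDist μ Z p.2 := by
          refine Finset.sum_le_sum fun p _ => ?_
          have hnn := mul_nonneg (rvDist_nonneg' μ h0 X p.1) (rvDist_nonneg' μ h0 Z p.2)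
          by_cases hz : rvDist μ W p = 0
          · simpa [hz] using hnn
          · rw [mul_div_cancel₀ _ hz]
      _ = 1 := by
          rw [Fintype.sum_prod_type]
          simp only [← Finset.mul_sum, tot, mul_one]
  have hl : 0 < Real.log 2 := Real.log_pos (by norm_num)
  rw [Hrv_eq μ h0, Hrv_eq μ h0, Hrv_eq μ h0, ← neg_add, neg_le_neg_iff,
    ← Finset.sum_add_distrib]
  rw [← sub_nonpos, ← Finset.sum_sub_distrib]
  have step : ∀ ω ∈ Finset.univ, μ ω * Real.logb 2 (atomP μ X ω) +
      μ ω * Real.logb 2 (atomP μ Z ω) - μ ω * Real.logb 2 (atomP μ W ω) ≤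
      (μ ω * (atomP μ X ω * atomP μ Z ω / atomP μ W ω) - μ ω) / Real.log 2 := by
    intro ω _
    rcases (h0 ω).eq_or_lt with hz | hp
    · simp [← hz]
    · have hx := atomP_pos μ h0 X ω hp
      have hy := atomP_pos μ h0 Z ω hp
      have hw := atomP_pos μ h0 W ω hp
      have := Real.log_le_sub_one_of_pos (div_pos (mul_pos hx hy) hw)
      rw [Real.log_div (mul_pos hx hy).ne' hw.ne', Real.log_mul hx.ne' hy.ne'] at this
      have h2 := mul_le_mul_of_nonneg_left this hp.le
      rw [le_div_iff₀ hl]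
      unfold Real.logb
      field_simp
      field_simp at h2
      linarith
  refine (Finset.sum_le_sum step).trans ?_
  rw [← Finset.sum_div, Finset.sum_sub_distrib, h1]
  exact div_nonpos_of_nonpos_of_nonneg (by linarith) hl.le

lemma Hrv_const {Ω α : Type} [Fintype Ω] [Fintype α] [DecidableEq α]
    (μ : Ω → ℝ) (h0 : ∀ ω, 0 ≤ μ ω) (h1 : ∑ ω, μ ω = 1) (X : Ω → α)
    (h : ∀ ω ω', X ω = X ω') : Hrv μ X = 0 := by
  rw [Hrv_eq μ h0]
  have : ∀ ω, atomP μ X ω = 1 := fun ω => by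
    simp [atomP, rvDist, fun ω' => h ω' ω, h1]
  simp [this]

lemma fin_telescope (n : ℕ) (A : ℕ → ℝ) :
    ∑ i : Fin n, (A (i + 1) - A i) = A n - A 0 := by
  rw [← Finset.sum_range_sub, Finset.sum_range]

/-- **Multi-letter to single-letter bound.** If for each `i` the variable `S_i` is
independent of the pair `(M, S_{i+1}^n)`, then with `X_i = (M, Y^{i−1}, S_{i+1}^n)`,
`I(M ; Y^n) ≤ Σ_{i=1}^n [ I(X_i ; Y_i) − I(X_i ; S_i) ]`. -/
theorem multiletter_to_single_letter_bound
    {Ω α β γ : Type} [Fintype Ω] [Fintype α] [Fintype β] [Fintype γ]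
    [DecidableEq α] [DecidableEq β] [DecidableEq γ]
    (μ : Ω → ℝ) (hμ0 : ∀ ω, 0 ≤ μ ω) (hμ1 : ∑ ω, μ ω = 1)
    (n : ℕ) (M : Ω → α) (S : Fin n → Ω → β) (Y : Fin n → Ω → γ)
    (hindep : ∀ i : Fin n, IndepRV μ (S i)
      (fun ω => (M ω, fun j : {j : Fin n // i < j} => S j ω))) :
    MIrv μ M (fun ω => fun i : Fin n => Y i ω)
      ≤ ∑ i : Fin n,
          (MIrv μ
              (fun ω => (M ω, (fun j : {j : Fin n // j < i} => Y j ω),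
                (fun j : {j : Fin n // i < j} => S j ω)))
              (Y i)
           - MIrv μ
              (fun ω => (M ω, (fun j : {j : Fin n // j < i} => Y j ω),
                (fun j : {j : Fin n // i < j} => S j ω)))
              (S i)) := by
  let A : ℕ → ℝ := fun k => Hrv μ (fun ω => fun j : {j : Fin n // j.val < k} => Y j ω)
  let B : ℕ → ℝ := fun k => Hrv μ (fun ω => (M ω, fun j : {j : Fin n // k ≤ j.val} => S j ω))
  let G : ℕ → ℝ := fun k => Hrv μ (fun ω => (M ω, (fun j : {j : Fin n // j.val < k} => Y j ω),
    fun j : {j : Fin n // k ≤ j.val} => S j ω))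
  have extL : ∀ (i : Fin n) (P : Fin n → Prop),
      (∀ j : Fin n, j.val < i.val + 1 → P j) ↔ (∀ j : Fin n, j < i → P j) ∧ P i := by
    intro i P
    refine ⟨fun h => ⟨fun j hj => h j (by have := Fin.lt_def.mp hj; omega), h i (by omega)⟩, ?_⟩
    rintro ⟨h, hi⟩ j hj
    rcases Nat.lt_succ_iff_lt_or_eq.mp hj with h' | h'
    · exact h j h'
    · rwa [Fin.ext h']
  have extR : ∀ (i : Fin n) (P : Fin n → Prop),
      (∀ j : Fin n, i.val ≤ j.val → P j) ↔ (∀ j : Fin n, i < j → P j) ∧ P i := by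
    intro i P
    refine ⟨fun h => ⟨fun j hj => h j (Fin.lt_def.mp hj).le, h i le_rfl⟩, ?_⟩
    rintro ⟨h, hi⟩ j hj
    rcases hj.lt_or_eq with h' | h'
    · exact h j h'
    · rwa [← Fin.ext h']
  have hA : ∀ i : Fin n, A (i + 1) ≤ A i + Hrv μ (Y i) := by
    intro i
    refine le_trans (le_of_eq ?_) (Hrv_subadd μ hμ0 hμ1 _ _)
    refine Hrv_congr μ hμ0 _ _ fun ω ω' => ?_
    simp only [funext_iff, Subtype.forall, Prod.mk.injEq]
    exact extL i (fun j => Y j ω = Y j ω')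
  have hB : ∀ i : Fin n, B i = Hrv μ (S i) + B (i + 1) := by
    intro i
    refine Eq.trans ?_ (Hrv_indep μ hμ0 _ _ (hindep i))
    refine Hrv_congr μ hμ0 _ _ fun ω ω' => ?_
    simp only [funext_iff, Subtype.forall, Prod.mk.injEq]
    rw [extR i (fun j => S j ω = S j ω')]
    tauto
  have hG1 : ∀ i : Fin n, MIrv μ (fun ω => (M ω, (fun j : {j : Fin n // j < i} => Y j ω),
                (fun j : {j : Fin n // i < j} => S j ω))) (Y i) =
      Hrv μ (fun ω => (M ω, (fun j : {j : Fin n // j < i} => Y j ω),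
                (fun j : {j : Fin n // i < j} => S j ω))) + Hrv μ (Y i) - G (i + 1) := by
    intro i
    refine MIrv_congr μ hμ0 _ _ _ fun ω ω' => ?_
    simp only [funext_iff, Subtype.forall, Prod.mk.injEq]
    rw [extL i (fun j => Y j ω = Y j ω')]
    simp only [Fin.lt_def, Nat.succ_le_iff]
    tauto
  have hG0 : ∀ i : Fin n, MIrv μ (fun ω => (M ω, (fun j : {j : Fin n // j < i} => Y j ω),
                (fun j : {j : Fin n // i < j} => S j ω))) (S i) =
      Hrv μ (fun ω => (M ω, (fun j : {j : Fin n // j < i} => Y j ω),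
                (fun j : {j : Fin n // i < j} => S j ω))) + Hrv μ (S i) - G i := by
    intro i
    refine MIrv_congr μ hμ0 _ _ _ fun ω ω' => ?_
    simp only [funext_iff, Subtype.forall, Prod.mk.injEq]
    rw [extR i (fun j => S j ω = S j ω')]
    simp only [Fin.lt_def]
    tauto
  have hA0 : A 0 = 0 := by
    refine Hrv_const μ hμ0 hμ1 _ fun ω ω' => ?_
    funext j
    exact absurd j.2 (by omega)
  have hAn : A n = Hrv μ (fun ω => fun i : Fin n => Y i ω) := by
    refine Hrv_congr μ hμ0 _ _ fun ω ω' => ?_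
    simp [funext_iff]
  have hBn : B n = Hrv μ M := by
    refine Hrv_congr μ hμ0 _ _ fun ω ω' => ?_
    simp only [funext_iff, Subtype.forall, Prod.mk.injEq]
    exact ⟨fun h => h.1, fun h => ⟨h, fun j hj => absurd j.2 (by omega)⟩⟩
  have hG0' : G 0 = B 0 := by
    refine Hrv_congr μ hμ0 _ _ fun ω ω' => ?_
    simp [funext_iff]
  have hGn : G n = Hrv μ (fun ω => (M ω, fun i : Fin n => Y i ω)) := by
    refine Hrv_congr μ hμ0 _ _ fun ω ω' => ?_
    simp only [funext_iff, Subtype.forall, Prod.mk.injEq]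
    exact ⟨fun h => ⟨h.1, fun j => h.2.1 j j.2⟩,
      fun h => ⟨h.1, fun j _ => h.2 j, fun j hj => absurd j.2 (by omega)⟩⟩
  have hsum : ∑ i : Fin n, ((A (i + 1) - A i) + (B (i + 1) - B i) - (G (i + 1) - G i)) =
      (A n - A 0) + (B n - B 0) - (G n - G 0) := by
    rw [Finset.sum_sub_distrib, Finset.sum_add_distrib, fin_telescope, fin_telescope,
      fin_telescope]
  calc _ = ∑ i : Fin n, ((A (i + 1) - A i) + (B (i + 1) - B i) - (G (i + 1) - G i)) := by
        rw [hsum]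
        unfold MIrv
        linarith
    _ ≤ _ := by
        refine Finset.sum_le_sum fun i _ => ?_
        rw [hG1 i, hG0 i]
        linarith [hA i, hB i]
end

section
/- Let 𝒳 and 𝒴 be finite sets and let p and q be pmfs on 𝒳×𝒴 whose total variation distance satisfies (1/2)·Σ_{(x,y)} |p(x,y) − q(x,y)| ≤ ε with 0 ≤ ε ≤ 1. Then |H(X|Y)_p − H(X|Y)_q| ≤ 2ε·log₂|𝒳| + (1+ε)·h(ε/(1+ε)), where H(X|Y)_p = H(p) − H(p_Y) is the conditional Shannon entropy under p (and likewise H(X|Y)_q under q), and p_Y, q_Y denote the 𝒴-marginals of p and q. -/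
open Finset

/-- The binary entropy function `h(x) = −x log₂ x − (1−x) log₂ (1−x)`
(with `h(0) = h(1) = 0`, using `logb 2 0 = 0`). -/
noncomputable def binH (x : ℝ) : ℝ :=
  -x * Real.logb 2 x - (1 - x) * Real.logb 2 (1 - x)

namespace AFW

open Real

lemma tangent {x y : ℝ} (hx : 0 ≤ x) (hy : 0 < y) :
    negMulLog x ≤ y - x - x * log y := by
  rcases hx.eq_or_lt with rfl | hx
  · simp [negMulLog, hy.le]
  · have h := log_le_sub_one_of_pos (div_pos hy hx)
    rw [log_div hy.ne' hx.ne'] at h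
    have h2 := mul_le_mul_of_nonneg_left h hx.le
    have h3 : x * (y / x - 1) = y - x := by field_simp
    rw [h3] at h2
    unfold negMulLog
    nlinarith

/-- The mixing term. -/
noncomputable def K (a b : ℝ) : ℝ := negMulLog a + negMulLog b - negMulLog (a + b)

lemma K_zero_left (b : ℝ) : K 0 b = 0 := by simp [K]
lemma K_zero_right (b : ℝ) : K b 0 = 0 := by simp [K]

lemma K_nonneg {a b : ℝ} (ha : 0 ≤ a) (hb : 0 ≤ b) : 0 ≤ K a b := by
  rcases ha.eq_or_lt with rfl | ha
  · rw [K_zero_left]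
  rcases hb.eq_or_lt with rfl | hb
  · rw [K_zero_right]
  have h1 : log a ≤ log (a + b) := log_le_log ha (by linarith)
  have h2 : log b ≤ log (a + b) := log_le_log hb (by linarith)
  unfold K negMulLog
  nlinarith [mul_le_mul_of_nonneg_left h1 ha.le, mul_le_mul_of_nonneg_left h2 hb.le]

lemma K_le {a b t : ℝ} (ha : 0 ≤ a) (hb : 0 ≤ b) (ht : 0 < t) (ht1 : t < 1) :
    K a b ≤ a * (-log t) + b * (-log (1 - t)) := by
  rcases (add_nonneg ha hb).eq_or_lt with h | h
  · have h1 : a = 0 := by linarith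
    have h2 : b = 0 := by linarith
    subst h1 h2
    simp [K]
  · have ht' : 0 < 1 - t := by linarith
    have h1 := tangent ha (mul_pos h ht)
    have h2 := tangent hb (mul_pos h ht')
    rw [log_mul h.ne' ht.ne'] at h1
    rw [log_mul h.ne' ht'.ne'] at h2
    unfold K
    have h3 : negMulLog (a + b) = -(a + b) * log (a + b) := rfl
    rw [h3]
    nlinarith

lemma sum_K_le {ι : Type} [Fintype ι] (f g : ι → ℝ) (hf : ∀ i, 0 ≤ f i) (hg : ∀ i, 0 ≤ g i) :
    ∑ i, K (f i) (g i) ≤ K (∑ i, f i) (∑ i, g i) := by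
  have hF : 0 ≤ ∑ i, f i := Finset.sum_nonneg fun i _ => hf i
  have hG : 0 ≤ ∑ i, g i := Finset.sum_nonneg fun i _ => hg i
  rcases hF.eq_or_lt with h | hF
  · have h0 := (Finset.sum_eq_zero_iff_of_nonneg (fun i _ => hf i)).1 h.symm
    rw [← h, K_zero_left]
    exact (Finset.sum_eq_zero fun i hi => by rw [h0 i hi, K_zero_left]).le
  rcases hG.eq_or_lt with h | hG
  · have h0 := (Finset.sum_eq_zero_iff_of_nonneg (fun i _ => hg i)).1 h.symm
    rw [← h, K_zero_right]
    exact (Finset.sum_eq_zero fun i hi => by rw [h0 i hi, K_zero_right]).le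
  set F := ∑ i, f i with hFd
  set G := ∑ i, g i with hGd
  have hS : 0 < F + G := by linarith
  have ht : 0 < F / (F + G) := by positivity
  have ht' : 1 - F / (F + G) = G / (F + G) := by field_simp; ring
  have ht1 : F / (F + G) < 1 := by
    have : 0 < G / (F + G) := by positivity
    linarith
  calc ∑ i, K (f i) (g i)
      ≤ ∑ i, (f i * (-log (F / (F + G))) + g i * (-log (1 - F / (F + G)))) :=
        Finset.sum_le_sum fun i _ => K_le (hf i) (hg i) ht ht1
    _ = F * (-log (F / (F + G))) + G * (-log (1 - F / (F + G))) := by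
        rw [Finset.sum_add_distrib, ← Finset.sum_mul, ← Finset.sum_mul]
    _ = K F G := by
        rw [ht', log_div hF.ne' hS.ne', log_div hG.ne' hS.ne']
        unfold K negMulLog
        ring

lemma K_mono {a b c : ℝ} (ha : 0 ≤ a) (hb : 0 ≤ b) (hbc : b ≤ c) : K a b ≤ K a c := by
  have h := sum_K_le (ι := Fin 2) ![a, 0] ![b, c - b]
    (by intro i; fin_cases i <;> simp [ha]) (by intro i; fin_cases i <;> simp [hb, hbc])
  simpa [Fin.sum_univ_two, K_zero_left] using h

lemma sub_sum {ι : Type} (s : Finset ι) (v : ι → ℝ) (hv : ∀ i, 0 ≤ v i) :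
    negMulLog (∑ i ∈ s, v i) ≤ ∑ i ∈ s, negMulLog (v i) := by
  classical
  induction s using Finset.induction_on with
  | empty => simp
  | insert i s hi ih =>
    rw [Finset.sum_insert hi, Finset.sum_insert hi]
    have := K_nonneg (hv i) (Finset.sum_nonneg fun j (_ : j ∈ s) => hv j)
    unfold K at this
    linarith

lemma sum_le_log {ι : Type} [Fintype ι] (v : ι → ℝ) (hv : ∀ i, 0 ≤ v i) :
    ∑ i, negMulLog (v i) - negMulLog (∑ i, v i) ≤ (∑ i, v i) * log (Fintype.card ι) := by
  have hV : 0 ≤ ∑ i, v i := Finset.sum_nonneg fun i _ => hv i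
  rcases hV.eq_or_lt with h | hV
  · have h0 := (Finset.sum_eq_zero_iff_of_nonneg (fun i _ => hv i)).1 h.symm
    rw [← h, Finset.sum_eq_zero fun i hi => by rw [h0 i hi, negMulLog_zero]]
    simp
  have hne : Nonempty ι := by
    by_contra hc
    rw [not_nonempty_iff] at hc
    simp at hV
  have hn : (0 : ℝ) < Fintype.card ι := by exact_mod_cast Fintype.card_pos
  set V := ∑ i, v i with hVd
  have h1 : ∑ i, negMulLog (v i) ≤
      ∑ i, (V / Fintype.card ι - v i - v i * log (V / Fintype.card ι)) :=
    Finset.sum_le_sum fun i _ => tangent (hv i) (div_pos hV hn)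
  rw [Finset.sum_sub_distrib, Finset.sum_sub_distrib, ← Finset.sum_mul, ← hVd,
    log_div hV.ne' hn.ne'] at h1
  have h2 : ∑ _i : ι, V / (Fintype.card ι : ℝ) = V := by
    simp; field_simp
  rw [h2] at h1
  have h3 : negMulLog V = -V * log V := rfl
  rw [h3]
  nlinarith

variable {A B : Type} [Fintype A] [Fintype B]

/-- Unnormalised conditional entropy in nats. -/
noncomputable def C (f : A × B → ℝ) : ℝ :=
  ∑ ab, negMulLog (f ab) - ∑ b, negMulLog (∑ a, f (a, b))

lemma C_eq (f : A × B → ℝ) :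
    C f = ∑ b, (∑ a, negMulLog (f (a, b)) - negMulLog (∑ a, f (a, b))) := by
  rw [C, Fintype.sum_prod_type_right, Finset.sum_sub_distrib]

lemma C_nonneg (f : A × B → ℝ) (hf : ∀ x, 0 ≤ f x) : 0 ≤ C f := by
  rw [C_eq]
  exact Finset.sum_nonneg fun b _ => sub_nonneg.2 (sub_sum _ _ fun a => hf _)

lemma C_le (f : A × B → ℝ) (hf : ∀ x, 0 ≤ f x) :
    C f ≤ (∑ x, f x) * log (Fintype.card A) := by
  rw [C_eq, Fintype.sum_prod_type_right, Finset.sum_mul]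
  exact Finset.sum_le_sum fun b _ => sum_le_log _ fun a => hf _

lemma C_add (f g : A × B → ℝ) :
    C (fun x => f x + g x) = C f + C g - ∑ x, K (f x) (g x)
      + ∑ b, K (∑ a, f (a, b)) (∑ a, g (a, b)) := by
  simp only [C, K, Finset.sum_add_distrib, Finset.sum_sub_distrib]
  ring

lemma C_add_ge (f g : A × B → ℝ) (hf : ∀ x, 0 ≤ f x) (hg : ∀ x, 0 ≤ g x) :
    C f + C g ≤ C (fun x => f x + g x) := by
  rw [C_add, Fintype.sum_prod_type_right]
  have := Finset.sum_le_sum fun b (_ : b ∈ (Finset.univ : Finset B)) =>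
    sum_K_le (fun a => f (a, b)) (fun a => g (a, b)) (fun a => hf _) (fun a => hg _)
  linarith

lemma C_add_le (f g : A × B → ℝ) (hf : ∀ x, 0 ≤ f x) (hg : ∀ x, 0 ≤ g x) :
    C (fun x => f x + g x) ≤ C f + C g + K (∑ x, f x) (∑ x, g x) := by
  rw [C_add]
  have h1 := sum_K_le (fun b => ∑ a, f (a, b)) (fun b => ∑ a, g (a, b))
    (fun b => Finset.sum_nonneg fun a _ => hf _) (fun b => Finset.sum_nonneg fun a _ => hg _)
  rw [← Fintype.sum_prod_type_right, ← Fintype.sum_prod_type_right] at h1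
  have h2 : 0 ≤ ∑ x, K (f x) (g x) := Finset.sum_nonneg fun x _ => K_nonneg (hf x) (hg x)
  linarith

lemma one_sided (p q : A × B → ℝ)
    (hp0 : ∀ ab, 0 ≤ p ab) (hp1 : ∑ ab, p ab = 1)
    (hq0 : ∀ ab, 0 ≤ q ab) (hq1 : ∑ ab, q ab = 1)
    (ε : ℝ) (hTV : (1 / 2) * ∑ ab, |p ab - q ab| ≤ ε) :
    C p - C q ≤ 2 * ε * log (Fintype.card A) + K 1 ε := by
  set f : A × B → ℝ := fun x => max (q x - p x) 0 with hf
  set g : A × B → ℝ := fun x => max (p x - q x) 0 with hg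
  have hf0 : ∀ x, 0 ≤ f x := fun x => le_max_right _ _
  have hg0 : ∀ x, 0 ≤ g x := fun x => le_max_right _ _
  have hpt : ∀ x, p x + f x = q x + g x := by
    intro x
    simp only [hf, hg]
    rcases le_total (p x) (q x) with h | h
    · rw [max_eq_left (by linarith), max_eq_right (by linarith)]; ring
    · rw [max_eq_right (by linarith), max_eq_left (by linarith)]; ring
  have habs : ∀ x, |p x - q x| = 2 * g x - (p x - q x) := by
    intro x
    simp only [hg]
    rcases le_total (p x) (q x) with h | h
    · rw [max_eq_right (by linarith), abs_of_nonpos (by linarith)]; ring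
    · rw [max_eq_left (by linarith), abs_of_nonneg (by linarith)]; ring
  have hG : ∑ x, g x ≤ ε := by
    simp only [habs, Finset.sum_sub_distrib, ← Finset.mul_sum, hp1, hq1] at hTV
    linarith
  have h1 := C_add_ge p f hp0 hf0
  have h2 := C_add_le q g hq0 hg0
  rw [funext hpt] at h1
  rw [hq1] at h2
  have hG0 : 0 ≤ ∑ x, g x := Finset.sum_nonneg fun x _ => hg0 x
  have h3 := K_mono zero_le_one hG0 hG
  have h4 := C_le g hg0
  have h5 := C_nonneg f hf0
  have hl : 0 ≤ log (Fintype.card A : ℝ) := log_natCast_nonneg _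
  have h6 : (∑ x, g x) * log (Fintype.card A) ≤ 2 * ε * log (Fintype.card A) :=
    mul_le_mul_of_nonneg_right (by linarith) hl
  linarith

lemma ent_eq {α : Type} [Fintype α] (q : α → ℝ) (hq : ∀ a, 0 ≤ q a) :
    shannonEnt q = (∑ a, negMulLog (q a)) / log 2 := by
  rw [shannonEnt, Finset.sum_div, ← Finset.sum_neg_distrib]
  refine Finset.sum_congr rfl fun a _ => ?_
  rcases (hq a).eq_or_lt with h | h
  · simp [← h]
  · rw [if_pos h, negMulLog, logb]; ring

lemma condEnt_eq (p : A × B → ℝ) (hp : ∀ x, 0 ≤ p x) :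
    shannonEnt p - shannonEnt (fun b : B => ∑ a, p (a, b)) = C p / log 2 := by
  rw [ent_eq p hp, ent_eq _ (fun b => Finset.sum_nonneg fun a _ => hp _), C]
  ring

lemma binH_eq {ε : ℝ} (h : 0 ≤ ε) : (1 + ε) * binH (ε / (1 + ε)) = K 1 ε / log 2 := by
  rcases h.eq_or_lt with rfl | h
  · simp [binH, K]
  have h1 : 0 < 1 + ε := by linarith
  have h2 : 1 - ε / (1 + ε) = 1 / (1 + ε) := by field_simp; ring
  rw [binH, h2, logb, logb, log_div h.ne' h1.ne', log_div one_ne_zero h1.ne', K]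
  simp only [negMulLog, log_one]
  have : log 2 ≠ 0 := (log_pos one_lt_two).ne'
  field_simp
  ring

end AFW

/-- **Alicki–Fannes–Winter continuity bound, classical case.** If `p` and `q` are pmfs
on `𝒳 × 𝒴` with total variation distance `(1/2)·Σ |p − q| ≤ ε ≤ 1`, then the conditional
entropies `H(X|Y) = H(p) − H(p_Y)` satisfy
`|H(X|Y)_p − H(X|Y)_q| ≤ 2ε·log₂|𝒳| + (1+ε)·h(ε/(1+ε))`. -/
theorem afw_conditional_entropy_continuity
    {𝒳 𝒴 : Type} [Fintype 𝒳] [Fintype 𝒴]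
    (p q : 𝒳 × 𝒴 → ℝ)
    (hp0 : ∀ ab, 0 ≤ p ab) (hp1 : ∑ ab, p ab = 1)
    (hq0 : ∀ ab, 0 ≤ q ab) (hq1 : ∑ ab, q ab = 1)
    (ε : ℝ) (hε0 : 0 ≤ ε) (hε1 : ε ≤ 1)
    (hTV : (1 / 2) * ∑ ab, |p ab - q ab| ≤ ε) :
    |(shannonEnt p - shannonEnt (fun b : 𝒴 => ∑ a, p (a, b)))
        - (shannonEnt q - shannonEnt (fun b : 𝒴 => ∑ a, q (a, b)))|
      ≤ 2 * ε * Real.logb 2 (Fintype.card 𝒳) + (1 + ε) * binH (ε / (1 + ε)) := by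
  have hl : 0 < Real.log 2 := Real.log_pos one_lt_two
  rw [AFW.condEnt_eq p hp0, AFW.condEnt_eq q hq0, AFW.binH_eq hε0, Real.logb]
  have h1 := AFW.one_sided p q hp0 hp1 hq0 hq1 ε hTV
  have h2 := AFW.one_sided q p hq0 hq1 hp0 hp1 ε (by simpa only [abs_sub_comm] using hTV)
  rw [← sub_div, abs_div, abs_of_pos hl, ← mul_div_assoc, ← add_div]
  refine div_le_div_of_nonneg_right (abs_le.2 ⟨?_, ?_⟩) hl.le <;> linarith
end
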